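/- arXiv:1205.5213 — 7 statements merged into one kernel-verified Lean document; each statement's English description precedes it below -/
import Mathlib

section
/- Let A be an additive frieze with first row a : ℤ → ℝ. Then for all integers r ≤ s, A(r,s) = (∑_{i=r}^{s} a(i)) − t_{s−r}, where t_m = m(m+1)/2 is the m-th triangular number. -/
/-- An additive frieze: a map `A` on pairs of integers determined by its first
row `a : ℤ → ℝ` via `A r r = a r`, `A r (r+1) = a r + a (r+1) - 1`, and the
unimodular rule for `s ≥ r + 2`. -/
def IsAdditiveFrieze (A : ℤ → ℤ → ℝ) (a : ℤ → ℝ) : Prop :=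
  (∀ r : ℤ, A r r = a r) ∧
  (∀ r : ℤ, A r (r + 1) = a r + a (r + 1) - 1) ∧
  (∀ r s : ℤ, r + 2 ≤ s → A r s = A r (s - 1) + A (r + 1) s - A (r + 1) (s - 1) - 1)

/-- The `m`-th triangular number `m (m + 1) / 2`, as a real number. -/
noncomputable def tri (m : ℤ) : ℝ := (m : ℝ) * ((m : ℝ) + 1) / 2

/-!
Let `D r s = A r (s + 1) - A r s - a (s + 1)`. The unimodular rule says `D r s = D (r + 1) s - 1`,
and the second row gives `D s s = -1`, so `D r s = -(s + 1 - r)`. Hence each step away from the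
first row adds the new summand `a (s + 1)` and subtracts `s + 1 - r`, which is the increment from
`t_{s-r}` to `t_{s+1-r}`.
-/

theorem tri_add_one (m : ℤ) : tri (m + 1) = tri m + (m + 1) := by
  simp only [tri]
  push_cast
  ring

namespace IsAdditiveFrieze

variable {A : ℤ → ℤ → ℝ} {a : ℤ → ℝ}

theorem entry_self (hA : IsAdditiveFrieze A a) (r : ℤ) : A r r = a r :=
  hA.1 r

theorem entry_self_add_one (hA : IsAdditiveFrieze A a) (r : ℤ) :
    A r (r + 1) = a r + a (r + 1) - 1 :=
  hA.2.1 r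

theorem entry_add_one_sub_entry (hA : IsAdditiveFrieze A a) {r s : ℤ} (hrs : r < s) :
    A r (s + 1) - A r s = A (r + 1) (s + 1) - A (r + 1) s - 1 := by
  have rule := hA.2.2 r (s + 1) (by lia)
  rw [add_sub_cancel_right] at rule
  linarith

theorem entry_add_one (hA : IsAdditiveFrieze A a) {r s : ℤ} (hrs : r ≤ s) :
    A r (s + 1) = A r s + a (s + 1) - (s + 1 - r) := by
  induction r, hrs using Int.leInductionDown with
  | base => rw [hA.entry_self_add_one, hA.entry_self]; ring
  | pred r hrs ih =>
    have rule := hA.entry_add_one_sub_entry (r := r - 1) (s := s) (by lia)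
    rw [sub_add_cancel] at rule
    push_cast
    linarith

end IsAdditiveFrieze

/-- For an additive frieze, `A r s = (∑_{i=r}^{s} a i) - t_{s-r}`. -/
theorem frieze_entry_eq_sum_sub_triangular
    (A : ℤ → ℤ → ℝ) (a : ℤ → ℝ) (hA : IsAdditiveFrieze A a) :
    ∀ r s : ℤ, r ≤ s → A r s = (∑ i ∈ Finset.Icc r s, a i) - tri (s - r) := by
  intro r s hrs
  induction s, hrs using Int.leInduction with
  | base => simp [hA.entry_self, tri]
  | succ s hrs ih =>
    have sum_split : ∑ i ∈ Finset.Icc r (s + 1), a i = (∑ i ∈ Finset.Icc r s, a i) + a (s + 1) := by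
      rw [← Finset.sum_Ico_add_eq_sum_Icc (by lia), Finset.Ico_add_one_right_eq_Icc]
    have tri_step : tri (s + 1 - r) = tri (s - r) + (s + 1 - r) := by
      rw [add_sub_right_comm, tri_add_one]
      push_cast
      ring
    calc A r (s + 1)
        = A r s + a (s + 1) - (s + 1 - r) := hA.entry_add_one hrs
      _ = (∑ i ∈ Finset.Icc r s, a i) - tri (s - r) + a (s + 1) - (s + 1 - r) := by rw [ih]
      _ = (∑ i ∈ Finset.Icc r (s + 1), a i) - tri (s + 1 - r) := by
        rw [sum_split, tri_step]
        ring
end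

section
/- Let A be an additive frieze with first row a : ℤ → ℝ and let n ≥ 2 be an integer. If for every r ∈ ℤ and every integer s with 0 ≤ s ≤ n−1 one has ∑_{i=r}^{r+s} a(i) ≥ t_s, then every entry A(r,s) with 0 ≤ s − r ≤ n−1 is nonnegative. -/
namespace IsAdditiveFrieze

variable {A : ℤ → ℤ → ℝ} {a : ℤ → ℝ} {r s : ℤ}

theorem sub_add_one_left (hA : IsAdditiveFrieze A a) (hrs : r < s) :
    A r s - A (r + 1) s = a r - (s - r) := by
  obtain ⟨h_diag, h_next, h_rule⟩ := hA
  rw [← Int.add_one_le_iff] at hrs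
  induction s, hrs using Int.leInduction with
  | base =>
    rw [h_next, h_diag]
    push_cast
    ring
  | succ s hrs ih =>
    have h_step := h_rule r (s + 1) (by omega)
    rw [add_sub_cancel_right] at h_step
    push_cast
    linarith

theorem eq_sum_sub_tri (hA : IsAdditiveFrieze A a) (hrs : r ≤ s) :
    A r s = ∑ i ∈ Finset.Icc r s, a i - tri (s - r) := by
  induction r, hrs using Int.leInductionDown with
  | base => simp [hA.1, tri]
  | pred r hrs ih =>
    have h_sub : A (r - 1) s - A r s = a (r - 1) - (s - r + 1) := by
      have := hA.sub_add_one_left (show r - 1 < s by omega)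
      rw [sub_add_cancel] at this
      push_cast at this
      linarith
    have h_sum : ∑ i ∈ Finset.Icc (r - 1) s, a i = a (r - 1) + ∑ i ∈ Finset.Icc r s, a i := by
      rw [← Finset.add_sum_Ioc_eq_sum_Icc (by omega), ← Finset.Icc_add_one_left_eq_Ioc,
        sub_add_cancel]
    have h_tri : tri (s - (r - 1)) = tri (s - r) + (s - r + 1) := by
      rw [← sub_add, tri_add_one, Int.cast_sub]
    linarith

theorem nonneg_iff_tri_le_sum (hA : IsAdditiveFrieze A a) (hrs : r ≤ s) :
    0 ≤ A r s ↔ tri (s - r) ≤ ∑ i ∈ Finset.Icc r s, a i := by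
  rw [hA.eq_sum_sub_tri hrs, sub_nonneg]

end IsAdditiveFrieze

/-- If every sum of at most `n` consecutive first-row values dominates the
corresponding triangular number, then the entries of the first `n` rows of the
frieze are nonnegative. -/
theorem frieze_nonneg_of_sums_ge_triangular
    (A : ℤ → ℤ → ℝ) (a : ℤ → ℝ) (hA : IsAdditiveFrieze A a)
    (n : ℤ) (hn : 2 ≤ n)
    (h : ∀ r s : ℤ, 0 ≤ s → s ≤ n - 1 →
      tri s ≤ ∑ i ∈ Finset.Icc r (r + s), a i) :
    ∀ r s : ℤ, 0 ≤ s - r → s - r ≤ n - 1 → 0 ≤ A r s := by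
  intro r s h_nonneg h_le
  rw [hA.nonneg_iff_tri_le_sum (sub_nonneg.mp h_nonneg)]
  simpa only [add_sub_cancel] using h r (s - r) h_nonneg h_le
end

section
/- Let A be an additive frieze with first row a : ℤ → ℝ and let n ≥ 2 be an integer. If row n of the frieze is a row of zeros (A(r, r+n−1) = 0 for all r ∈ ℤ), then the first row is n-periodic: a(k + n) = a(k) for every k ∈ ℤ. -/
/-! Down a diagonal, the unimodular rule says that the increment `A r s - A r (s - 1)` drops by one
each time `r` decreases, so it equals `a s - (s - r)`. Summing the increments writes `A r (r + m)`
as a sum of `m + 1` consecutive entries of the first row minus the triangular number `t_m`. Two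
neighbours in row `n` are therefore sums over windows of length `n` shifted by one place, and their
difference is `a (k + n) - a k`. -/

namespace IsAdditiveFrieze

variable {A : ℤ → ℤ → ℝ} {a : ℤ → ℝ}

theorem diagonal_increment (hA : IsAdditiveFrieze A a) (r : ℤ) (m : ℕ) :
    A r (r + m + 1) - A r (r + m) = a (r + m + 1) - (m + 1) := by
  obtain ⟨h_first, h_second, h_rule⟩ := hA
  induction m generalizing r with
  | zero =>
    simp only [Nat.cast_zero, add_zero, h_first, h_second]
    ring
  | succ m ih =>
    have h_diamond := h_rule r (r + (m + 1) + 1) (by lia)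
    have h_next := ih (r + 1)
    rw [add_sub_cancel_right] at h_diamond
    rw [add_assoc r 1, add_comm 1 (m : ℤ)] at h_next
    push_cast
    linarith

theorem apply_add_eq_sum_sub_tri (hA : IsAdditiveFrieze A a) (r : ℤ) (m : ℕ) :
    A r (r + m) = ∑ i ∈ Finset.range (m + 1), a (r + i) - tri m := by
  induction m with
  | zero => simp [hA.1, tri]
  | succ m ih =>
    have h_step := hA.diagonal_increment r m
    have h_tri : tri (m + 1) = tri m + (m + 1) := by
      simp only [tri]
      push_cast
      ring
    rw [Finset.sum_range_succ]
    push_cast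
    rw [← add_assoc, h_tri]
    linarith

theorem row_increment (hA : IsAdditiveFrieze A a) (r : ℤ) (m : ℕ) :
    A (r + 1) (r + 1 + m) - A r (r + m) = a (r + 1 + m) - a r := by
  have h_window : ∑ i ∈ Finset.range (m + 1), a (r + i) =
      ∑ i ∈ Finset.range m, a (r + 1 + i) + a r := by
    simp [Finset.sum_range_succ', add_assoc, add_comm (1 : ℤ)]
  rw [hA.apply_add_eq_sum_sub_tri, hA.apply_add_eq_sum_sub_tri, h_window, Finset.sum_range_succ]
  ring

end IsAdditiveFrieze

theorem first_row_periodic_of_row_zero_general {A : ℤ → ℤ → ℝ} {a : ℤ → ℝ}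
    (hA : IsAdditiveFrieze A a) {n : ℤ} (hn : 1 ≤ n) :
    Function.Periodic (fun r ↦ A r (r + n - 1)) 1 ↔ Function.Periodic a n := by
  obtain ⟨m, rfl⟩ := Int.le.dest hn
  refine forall_congr' fun r ↦ ?_
  have h_shift := hA.row_increment r m
  simp only [← add_assoc, add_right_comm _ 1 (m : ℤ), add_sub_cancel_right] at h_shift ⊢
  rw [← sub_eq_zero, h_shift, sub_eq_zero]

/-- If row `n` of an additive frieze is a row of zeros, then the first row is
`n`-periodic. -/
theorem first_row_periodic_of_row_zero
    (A : ℤ → ℤ → ℝ) (a : ℤ → ℝ) (hA : IsAdditiveFrieze A a)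
    (n : ℤ) (hn : 2 ≤ n)
    (hrow : ∀ r : ℤ, A r (r + n - 1) = 0) :
    ∀ k : ℤ, a (k + n) = a k :=
  (first_row_periodic_of_row_zero_general hA (by lia)).1 fun r ↦ by simp only [hrow]
end

section
/- Let A be an additive frieze with first row a : ℤ → ℝ and let n ≥ 2 be an integer. If row n of the frieze is a row of zeros (A(r, r+n−1) = 0 for all r ∈ ℤ), then the whole frieze is invariant under translation by n positions: A(r+n, s+n) = A(r,s) for all integers r ≤ s. -/
/-!
By the unimodular rule the mixed second difference of `A` is `1`, so `A r s` is the sum of `a` over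
`[r, s]` minus the triangular number `tri (s - r)`. Moving an entry one place along its row
therefore changes it by `a (s + 1) - a r`. Constancy of row `n` is thus the same as `n`-periodicity
of `a`, and the closed form carries this periodicity over to every row.
-/

theorem tri_add_two (m : ℤ) : tri (m + 2) = 2 * tri (m + 1) - tri m + 1 := by
  simp only [tri]
  push_cast
  ring

namespace IsAdditiveFrieze

variable {A : ℤ → ℤ → ℝ} {a : ℤ → ℝ}

theorem apply_add_natCast_add_two (hA : IsAdditiveFrieze A a) (r : ℤ) (k : ℕ) :
    A r (r + (k + 2 : ℕ)) =
      A r (r + (k + 1 : ℕ)) + A (r + 1) (r + 1 + (k + 1 : ℕ)) - A (r + 1) (r + 1 + k) - 1 := by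
  obtain ⟨-, -, hrule⟩ := hA
  convert hrule r (r + (k + 2 : ℕ)) (by omega) using 5 <;> push_cast <;> ring

theorem apply_add_natCast_eq_sum_sub_tri (hA : IsAdditiveFrieze A a) (r : ℤ) (k : ℕ) :
    A r (r + k) = ∑ i ∈ Finset.range (k + 1), a (r + i) - tri k := by
  induction k using Nat.twoStepInduction generalizing r with
  | zero => simp [hA.1, tri]
  | one => norm_num [hA.2.1, Finset.sum_range_succ, tri]
  | more k ih₀ ih₁ =>
    have hlast : a (r + 1 + (k + 1 : ℕ)) = a (r + (k + 2 : ℕ)) := by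
      congr 1
      push_cast
      ring
    have htri : tri (k + 2 : ℕ) = 2 * tri (k + 1 : ℕ) - tri k + 1 := by
      exact_mod_cast tri_add_two k
    rw [hA.apply_add_natCast_add_two, ih₁, ih₁, ih₀, Finset.sum_range_succ _ (k + 2),
      Finset.sum_range_succ (fun i : ℕ ↦ a (r + 1 + i)) (k + 1), hlast, htri]
    ring

theorem apply_add_one_sub_apply (hA : IsAdditiveFrieze A a) {r s : ℤ} (hrs : r ≤ s) :
    A (r + 1) (s + 1) - A r s = a (s + 1) - a r := by
  obtain ⟨k, rfl⟩ := Int.exists_add_of_le hrs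
  calc A (r + 1) (r + k + 1) - A r (r + k)
      = ∑ i ∈ Finset.range (k + 1), (a (r + 1 + i) - a (r + i)) := by
        rw [add_right_comm r, hA.apply_add_natCast_eq_sum_sub_tri,
          hA.apply_add_natCast_eq_sum_sub_tri, sub_sub_sub_cancel_right, Finset.sum_sub_distrib]
    _ = ∑ i ∈ Finset.range (k + 1), (a (r + (i + 1 : ℕ)) - a (r + i)) := by
        simp only [Nat.cast_add, Nat.cast_one, add_assoc, add_comm (1 : ℤ)]
    _ = a (r + k + 1) - a r := by
        rw [Finset.sum_range_sub fun i : ℕ ↦ a (r + i)]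
        simp [add_assoc]

theorem periodic_of_row_const (hA : IsAdditiveFrieze A a) {n : ℤ} (hn : 1 ≤ n) {c : ℝ}
    (hrow : ∀ r : ℤ, A r (r + n - 1) = c) : Function.Periodic a n := by
  intro r
  have hshift := hA.apply_add_one_sub_apply (show r ≤ r + n - 1 by omega)
  have hnext : A (r + 1) (r + n) = c := by
    rw [← hrow (r + 1)]
    congr 1
    ring
  rw [sub_add_cancel, hnext, hrow, sub_self] at hshift
  exact sub_eq_zero.mp hshift.symm

theorem translation_invariant_of_periodic (hA : IsAdditiveFrieze A a) {n : ℤ}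
    (ha : Function.Periodic a n) {r s : ℤ} (hrs : r ≤ s) : A (r + n) (s + n) = A r s := by
  obtain ⟨k, rfl⟩ := Int.exists_add_of_le hrs
  rw [add_right_comm r, hA.apply_add_natCast_eq_sum_sub_tri, hA.apply_add_natCast_eq_sum_sub_tri]
  simp only [add_right_comm r n, ha _]

end IsAdditiveFrieze

theorem frieze_translation_invariant_of_row_zero_general
    {A : ℤ → ℤ → ℝ} {a : ℤ → ℝ} (hA : IsAdditiveFrieze A a) {n : ℤ} (hn : 1 ≤ n) {c : ℝ}
    (hrow : ∀ r : ℤ, A r (r + n - 1) = c) :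
    ∀ r s : ℤ, r ≤ s → A (r + n) (s + n) = A r s :=
  fun _ _ ↦ hA.translation_invariant_of_periodic (hA.periodic_of_row_const hn hrow)

/-- If row `n` of an additive frieze is a row of zeros, then the whole frieze
is invariant under translation by `n` positions. -/
theorem frieze_translation_invariant_of_row_zero
    (A : ℤ → ℤ → ℝ) (a : ℤ → ℝ) (hA : IsAdditiveFrieze A a)
    (n : ℤ) (hn : 2 ≤ n)
    (hrow : ∀ r : ℤ, A r (r + n - 1) = 0) :
    ∀ r s : ℤ, r ≤ s → A (r + n) (s + n) = A r s :=
  frieze_translation_invariant_of_row_zero_general hA (one_le_two.trans hn) hrow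
end

section
/- Let A be an additive frieze with first row a : ℤ → ℝ and let n ≥ 2 be an integer. Suppose a is n-periodic (a(k+n) = a(k) for all k ∈ ℤ) and the values a(0), a(1), …, a(n−1) are a permutation of the integers 0, 1, …, n−1. Then A(r, r+n−1) = 0 for all r ∈ ℤ (the frieze has n+1 rows), and every entry A(r,s) with 0 ≤ s − r ≤ n−1 is a nonnegative integer. -/
open Finset

theorem sum_range_natCast_eq_tri (n : ℕ) : ∑ i ∈ range n, (i : ℝ) = tri (n - 1) := by
  induction n with
  | zero => simp [tri]
  | succ n ih =>
    rw [sum_range_succ, ih]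
    simp only [tri]
    push_cast
    ring

theorem sum_range_card_le_sum_of_injOn {ι : Type*} {s : Finset ι} {f : ι → ℕ}
    (hf : Set.InjOn f s) : ∑ i ∈ range #s, i ≤ ∑ i ∈ s, f i := by
  have hf' : Set.InjOn (fun i ↦ (f i : ℤ)) s := Nat.cast_injective.comp_injOn hf
  have hnonneg : ∀ x ∈ s.image (fun i ↦ (f i : ℤ)), 0 ≤ x := by simp
  have hle : ((∑ i ∈ range #s, i : ℕ) : ℤ) ≤ ((∑ i ∈ s, f i : ℕ) : ℤ) := by
    simpa [card_image_of_injOn hf', sum_image hf'] using sum_range_le_sum hnonneg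
  exact Nat.cast_le.mp hle

theorem exists_natCast_eq_sum_sub_tri {ι : Type*} {s : Finset ι} {f : ι → ℕ}
    (hf : Set.InjOn f s) : ∃ m : ℕ, ∑ i ∈ s, (f i : ℝ) - tri (#s - 1) = m := by
  refine ⟨∑ i ∈ s, f i - ∑ i ∈ range #s, i, ?_⟩
  rw [Nat.cast_sub (sum_range_card_le_sum_of_injOn hf), Nat.cast_sum, Nat.cast_sum,
    sum_range_natCast_eq_tri]

namespace IsAdditiveFrieze

variable {A : ℤ → ℤ → ℝ} {a : ℤ → ℝ}

theorem eq_sum_Icc_sub_tri (hA : IsAdditiveFrieze A a) {r s : ℤ} (hrs : r ≤ s) :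
    A r s = ∑ k ∈ Icc r s, a k - tri (s - r) := by
  have sum_Icc_eq_add {t : ℤ} (hrt : r ≤ t) :
      ∑ k ∈ Icc r t, a k = a r + ∑ k ∈ Icc (r + 1) t, a k := by
    rw [Icc_add_one_left_eq_Ioc, add_sum_Ioc_eq_sum_Icc hrt]
  obtain rfl | rfl | hrs₂ : s = r ∨ s = r + 1 ∨ r + 2 ≤ s := by omega
  · simp [hA.1, tri]
  · simp [hA.2.1, sum_Icc_eq_add, tri]
  · rw [hA.2.2 r s hrs₂, hA.eq_sum_Icc_sub_tri (show r ≤ s - 1 by omega),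
      hA.eq_sum_Icc_sub_tri (show r + 1 ≤ s by omega),
      hA.eq_sum_Icc_sub_tri (show r + 1 ≤ s - 1 by omega),
      sum_Icc_eq_add hrs, sum_Icc_eq_add (show r ≤ s - 1 by omega)]
    simp only [tri]
    push_cast
    ring
termination_by (s - r).toNat

theorem exists_natCast_eq_of_injOn (hA : IsAdditiveFrieze A a) {r s : ℤ} (hrs : r ≤ s)
    (hinj : Set.InjOn a (Set.Icc r s)) (hnat : ∀ k ∈ Set.Icc r s, ∃ m : ℕ, a k = m) :
    ∃ m : ℕ, A r s = m := by
  choose! b hab using hnat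
  have hb : Set.InjOn b (Icc r s) := by
    rw [coe_Icc]
    intro j hj k hk hjk
    exact hinj hj hk (by rw [hab j hj, hab k hk, hjk])
  have hsum : ∑ k ∈ Icc r s, a k = ∑ k ∈ Icc r s, (b k : ℝ) :=
    sum_congr rfl fun k hk ↦ hab k (by simpa using hk)
  have hcard : (#(Icc r s) : ℤ) - 1 = s - r := by
    rw [Int.card_Icc]
    omega
  rw [hA.eq_sum_Icc_sub_tri hrs, hsum, ← hcard]
  exact exists_natCast_eq_sum_sub_tri hb

theorem eq_zero_of_bijOn (hA : IsAdditiveFrieze A a) {r : ℤ} {n : ℕ} (hn : 0 < n)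
    (ha : Set.BijOn a (Set.Ico r (r + n)) (Nat.cast '' Set.Iio n)) :
    A r (r + n - 1) = 0 := by
  have himage : (Ico r (r + n)).image a = (range n).image Nat.cast := by
    apply coe_injective
    simpa using ha.image_eq
  have hinj : Set.InjOn a (Ico r (r + n : ℤ)) := by simpa using ha.injOn
  have hsum : ∑ k ∈ Ico r (r + n), a k = tri (n - 1) := calc
    ∑ k ∈ Ico r (r + n), a k = ∑ x ∈ (Ico r (r + n)).image a, x :=
      (sum_image (f := fun x ↦ x) hinj).symm
    _ = ∑ x ∈ (range n).image Nat.cast, x := by rw [himage]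
    _ = ∑ i ∈ range n, (i : ℝ) := sum_image Nat.cast_injective.injOn
    _ = tri (n - 1) := sum_range_natCast_eq_tri n
  rw [hA.eq_sum_Icc_sub_tri (by omega), Icc_sub_one_right_eq_Ico, hsum,
    show r + n - 1 - r = (n : ℤ) - 1 by ring, sub_self]

end IsAdditiveFrieze

section Periodic

variable {α : Type*} [AddCommGroup α] [LinearOrder α] [IsOrderedAddMonoid α] [Archimedean α]
  {c : α}

theorem bijOn_toIcoMod_Ico (hc : 0 < c) (x y : α) :
    Set.BijOn (toIcoMod hc x) (Set.Ico y (y + c)) (Set.Ico x (x + c)) := by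
  have hinv (u v : α) :
      Set.LeftInvOn (toIcoMod hc u) (toIcoMod hc v) (Set.Ico u (u + c)) := fun z hz ↦ by
    rw [toIcoMod_toIcoMod, (toIcoMod_eq_self hc).mpr hz]
  exact Set.InvOn.bijOn ⟨hinv y x, hinv x y⟩ (fun z _ ↦ toIcoMod_mem_Ico hc x z)
    (fun z _ ↦ toIcoMod_mem_Ico hc y z)

theorem bijOn_Ico_of_periodic {β : Type*} {f : α → β} (hf : Function.Periodic f c) (hc : 0 < c)
    {x : α} {t : Set β} (hx : Set.BijOn f (Set.Ico x (x + c)) t) (y : α) :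
    Set.BijOn f (Set.Ico y (y + c)) t :=
  (hx.comp (bijOn_toIcoMod_Ico hc x y)).congr fun z _ ↦ hf.sub_zsmul_eq (toIcoDiv hc x z)

end Periodic

theorem bijOn_Ico_zero_of_perm {R : Type*} [AddMonoidWithOne R] [CharZero R] {n : ℕ} {a : ℤ → R}
    (σ : Equiv.Perm (Fin n)) (ha : ∀ i : Fin n, a (i : ℤ) = ((σ i : ℕ) : R)) :
    Set.BijOn a (Set.Ico 0 (n : ℤ)) (Nat.cast '' Set.Iio n) := by
  have exists_fin {k : ℤ} (hk : k ∈ Set.Ico 0 (n : ℤ)) : ∃ i : Fin n, (i : ℤ) = k :=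
    ⟨⟨k.toNat, by grind⟩, by grind⟩
  refine ⟨fun k hk ↦ ?_, fun j hj k hk hjk ↦ ?_, ?_⟩
  · obtain ⟨i, rfl⟩ := exists_fin hk
    exact ⟨σ i, (σ i).isLt, (ha i).symm⟩
  · obtain ⟨i, rfl⟩ := exists_fin hj
    obtain ⟨i', rfl⟩ := exists_fin hk
    rw [ha, ha, Nat.cast_inj, Fin.val_inj, σ.injective.eq_iff] at hjk
    rw [hjk]
  · rintro _ ⟨m, hm, rfl⟩
    exact ⟨σ.symm ⟨m, hm⟩, by simp, by simp [ha]⟩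

/-- If the first row of an additive frieze is `n`-periodic and a period is a
permutation of `0, 1, …, n - 1`, then row `n` is a row of zeros and all
entries of the frieze are nonnegative integers. -/
theorem frieze_of_permutation_first_row
    (A : ℤ → ℤ → ℝ) (a : ℤ → ℝ) (hA : IsAdditiveFrieze A a)
    (n : ℕ) (hn : 2 ≤ n)
    (hper : ∀ k : ℤ, a (k + n) = a k)
    (σ : Equiv.Perm (Fin n)) (hperm : ∀ i : Fin n, a (i : ℤ) = ((σ i : ℕ) : ℝ)) :
    (∀ r : ℤ, A r (r + n - 1) = 0) ∧
      (∀ r s : ℤ, 0 ≤ s - r → s - r ≤ (n : ℤ) - 1 → ∃ m : ℕ, A r s = (m : ℝ)) := by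
  have hn₀ : 0 < n := by omega
  have hbij (r : ℤ) : Set.BijOn a (Set.Ico r (r + n)) (Nat.cast '' Set.Iio n) :=
    bijOn_Ico_of_periodic hper (by omega) (x := 0)
      (by simpa only [zero_add] using bijOn_Ico_zero_of_perm σ hperm) r
  refine ⟨fun r ↦ hA.eq_zero_of_bijOn hn₀ (hbij r), fun r s h₀ h₁ ↦ ?_⟩
  have hsub : Set.Icc r s ⊆ Set.Ico r (r + n) := Set.Icc_subset_Ico_right (by omega)
  refine hA.exists_natCast_eq_of_injOn (by omega) ((hbij r).injOn.mono hsub) fun k hk ↦ ?_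
  obtain ⟨m, -, hm⟩ := (hbij r).mapsTo (hsub hk)
  exact ⟨m, hm.symm⟩
end

section
/- Let n ≥ 3 be an integer and let a : ℤ → ℝ be (n−1)-periodic with ∑_{i=r}^{r+n−2} a(i) = t_{n−2} for every r ∈ ℤ (so a is the first row of an additive frieze with n rows). Define b : ℤ → ℝ to be the n-periodic function with b(0) = n−1 and b(i) = a(i−1) for 1 ≤ i ≤ n−1 (inserting the value n−1 into each period of the first row). Then ∑_{i=r}^{r+n−1} b(i) = t_{n−1} for every r ∈ ℤ; that is, b is the first row of an additive frieze with n+1 rows. -/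
/-!
The sum of a periodic function over one full period does not depend on where the period starts, so
it is enough to consider the window of `b` starting at `0`. That window is the inserted value
followed by a full window of `a`, and the inserted value `n - 1` is exactly the increment from
`tri (n - 2)` to `tri (n - 1)`.
-/

open Finset

theorem tri_eq_add_tri_sub_one (m : ℤ) : tri m = m + tri (m - 1) := by
  simp only [tri]
  push_cast
  ring

section PeriodicSum

variable {M : Type*} [AddCommMonoid M] {n : ℤ}

theorem sum_Ico_add_period_eq {f : ℤ → M} (hf : Function.Periodic f n) (r s : ℤ) :
    ∑ i ∈ Ico r (r + n), f i = ∑ i ∈ Ico s (s + n), f i := by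
  rcases le_or_gt n 0 with hn | hn
  · rw [Ico_eq_empty (by lia), Ico_eq_empty (by lia)]
  have sum_succ (k : ℤ) : ∑ i ∈ Ico (k + 1) (k + 1 + n), f i = ∑ i ∈ Ico k (k + n), f i :=
    calc ∑ i ∈ Ico (k + 1) (k + 1 + n), f i
        = ∑ i ∈ Ico (k + 1) (k + n), f i + f (k + n) := by
          rw [sum_Ico_add_eq_sum_Ico_add_one (by lia), add_right_comm]
      _ = f k + ∑ i ∈ Ico (k + 1) (k + n), f i := by rw [hf k, add_comm]
      _ = ∑ i ∈ Ico k (k + n), f i := by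
          rw [Ico_add_one_left_eq_Ioo, add_sum_Ioo_eq_sum_Ico (by lia)]
  induction r using Int.inductionOn' (b := s) with
  | zero => rfl
  | succ k _ ih => rw [sum_succ, ih]
  | pred k _ ih => rw [← sum_succ, sub_add_cancel, ih]

theorem sum_Ico_add_period_eq_add_sum_of_insert {a b : ℤ → M} (hn : 0 < n)
    (hb : Function.Periodic b n) (hba : ∀ i ∈ Ico 1 n, b i = a (i - 1)) (r : ℤ) :
    ∑ i ∈ Ico r (r + n), b i = b 0 + ∑ i ∈ Ico 0 (n - 1), a i :=
  calc ∑ i ∈ Ico r (r + n), b i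
      = ∑ i ∈ Ico 0 n, b i := by rw [sum_Ico_add_period_eq hb r 0, zero_add]
    _ = b 0 + ∑ i ∈ Ico (0 + 1) n, b i := by
        rw [Ico_add_one_left_eq_Ioo, add_sum_Ioo_eq_sum_Ico hn]
    _ = b 0 + ∑ i ∈ Ico (0 + 1) (n - 1 + 1), a (i - 1) := by
        rw [zero_add, sub_add_cancel, sum_congr rfl hba]
    _ = b 0 + ∑ i ∈ Ico 0 (n - 1), a i := by rw [sum_Ico_add_right_sub_eq]

end PeriodicSum

/-- Inserting the value `n - 1` into each period of the first row of an
additive frieze with `n` rows yields the first row of an additive frieze with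
`n + 1` rows. -/
theorem insert_row_value_gives_frieze
    (n : ℤ) (hn : 3 ≤ n) (a : ℤ → ℝ)
    (haper : ∀ k : ℤ, a (k + (n - 1)) = a k)
    (hasum : ∀ r : ℤ, (∑ i ∈ Finset.Icc r (r + n - 2), a i) = tri (n - 2))
    (b : ℤ → ℝ)
    (hbper : ∀ k : ℤ, b (k + n) = b k)
    (hb0 : b 0 = ((n : ℝ) - 1))
    (hbi : ∀ i : ℤ, 1 ≤ i → i ≤ n - 1 → b i = a (i - 1)) :
    ∀ r : ℤ, (∑ i ∈ Finset.Icc r (r + n - 1), b i) = tri (n - 1) := by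
  intro r
  have sum_a : ∑ i ∈ Ico 0 (n - 1), a i = tri (n - 2) := by
    rw [← hasum 0, zero_add, ← Icc_sub_one_right_eq_Ico, sub_sub, one_add_one_eq_two]
  have b_eq_a : ∀ i ∈ Ico 1 n, b i = a (i - 1) := fun i hi ↦
    hbi i (mem_Ico.1 hi).1 (Int.le_sub_one_of_lt (mem_Ico.1 hi).2)
  calc ∑ i ∈ Icc r (r + n - 1), b i
      = ∑ i ∈ Ico r (r + n), b i := by rw [Icc_sub_one_right_eq_Ico]
    _ = b 0 + ∑ i ∈ Ico 0 (n - 1), a i :=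
        sum_Ico_add_period_eq_add_sum_of_insert (by lia) hbper b_eq_a r
    _ = (n - 1) + tri (n - 2) := by rw [hb0, sum_a]
    _ = tri (n - 1) := by
        rw [tri_eq_add_tri_sub_one (n - 1), sub_sub n, one_add_one_eq_two, Int.cast_sub,
          Int.cast_one]
end

section
/- Let A be an additive frieze with first row a : ℤ → ℝ. Then for all integers r, j, k, s with r < j ≤ k < s, A(j,k) + A(r,s) = A(j,s) + A(r,k) − (j − r)(s − k). (Here (j−r)(s−k) is the area of the parallelogram in the frieze with vertices A(j,k), A(j,s), A(r,s), A(r,k), when each elementary diamond is given area 1.) -/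
/-! Give a parallelogram with sides along the diagonals of the frieze the area "left plus right
corner minus top and bottom corners". This area is additive when parallelograms are glued along a
side, and every elementary diamond has area `1`. So the area of a `(j - r) × (s - k)` parallelogram
is `(j - r) (s - k)`, the number of elementary diamonds in it. -/

section Frieze

variable {G : Type*} [AddCommGroup G]

section ParallelogramArea

variable {ι κ : Type*}

/-- The area assigned by an array `A` to the parallelogram with left corner `A r k`, right corner
`A j s`, top corner `A j k` and bottom corner `A r s`. -/
def parallelogramArea (A : ι → κ → G) (r j : ι) (k s : κ) : G :=
  (A r k + A j s) - (A j k + A r s)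

theorem parallelogramArea_self_left (A : ι → κ → G) (r : ι) (k s : κ) :
    parallelogramArea A r r k s = 0 := by
  simp [parallelogramArea]

theorem parallelogramArea_self_right (A : ι → κ → G) (r j : ι) (k : κ) :
    parallelogramArea A r j k k = 0 := by
  simp [parallelogramArea, add_comm]

theorem parallelogramArea_add_left (A : ι → κ → G) (r i j : ι) (k s : κ) :
    parallelogramArea A r i k s + parallelogramArea A i j k s = parallelogramArea A r j k s := by
  unfold parallelogramArea
  abel

theorem parallelogramArea_add_right (A : ι → κ → G) (r j : ι) (k l s : κ) :
    parallelogramArea A r j k l + parallelogramArea A r j l s = parallelogramArea A r j k s := by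
  unfold parallelogramArea
  abel

end ParallelogramArea

/-- Every elementary diamond of the array `A` has area `c`. The left corner `A r s` ranges over
`r < s`, so that all four corners lie in rows of positive index: the implicit top row of zeros is
not encoded in `A`. -/
def HasDiamondArea (A : ℤ → ℤ → G) (c : G) : Prop :=
  ∀ ⦃r s : ℤ⦄, r < s → parallelogramArea A r (r + 1) s (s + 1) = c

theorem IsAdditiveFrieze.hasDiamondArea {A : ℤ → ℤ → ℝ} {a : ℤ → ℝ} (hA : IsAdditiveFrieze A a) :
    HasDiamondArea A 1 := by
  intro r s hrs
  have unimodular := hA.2.2 r (s + 1) (by lia)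
  rw [add_sub_cancel_right] at unimodular
  rw [parallelogramArea]
  linarith

theorem HasDiamondArea.parallelogramArea_succ {A : ℤ → ℤ → G} {c : G} (hA : HasDiamondArea A c)
    {r k s : ℤ} (hrk : r < k) (hks : k ≤ s) :
    parallelogramArea A r (r + 1) k s = (s - k) • c := by
  induction s, hks using Int.leInduction with
  | base => rw [parallelogramArea_self_right, sub_self, zero_zsmul]
  | succ s hks ih =>
    rw [← parallelogramArea_add_right A r (r + 1) k s (s + 1), ih, hA (hrk.trans_le hks)]
    module

theorem frieze_parallelogram_rule_general {A : ℤ → ℤ → G} {c : G} (hA : HasDiamondArea A c)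
    {r j k s : ℤ} (hrj : r ≤ j) (hjk : j ≤ k) (hks : k ≤ s) :
    parallelogramArea A r j k s = ((j - r) * (s - k)) • c := by
  induction j, hrj using Int.leInduction with
  | base => rw [parallelogramArea_self_left, sub_self, zero_mul, zero_zsmul]
  | succ j _ ih =>
    rw [← parallelogramArea_add_left A r j (j + 1) k s, ih (by lia),
      hA.parallelogramArea_succ hjk hks]
    module

end Frieze

/-- The parallelogram rule for additive friezes:
`A j k + A r s = A j s + A r k - (j - r) (s - k)`. -/
theorem frieze_parallelogram_rule
    (A : ℤ → ℤ → ℝ) (a : ℤ → ℝ) (hA : IsAdditiveFrieze A a) :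
    ∀ r j k s : ℤ, r < j → j ≤ k → k < s →
      A j k + A r s = A j s + A r k - ((j - r : ℤ) : ℝ) * ((s - k : ℤ) : ℝ) := by
  intro r j k s hrj hjk hks
  have area := frieze_parallelogram_rule_general hA.hasDiamondArea hrj.le hjk hks.le
  rw [parallelogramArea, zsmul_one, Int.cast_mul] at area
  linarith
end
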